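/- Fix T > 0, t₀ ∈ ℝ and c > 0, and define μ(t) = 1/(T + t₀ − t) for t ∈ [t₀, t₀ + T). Let α : (0,∞) → (0,∞) be differentiable with α'(s) ≤ (c/2)·s⁻²·α(s)² for all s > 0. Then for every t ∈ [t₀, t₀ + T): α(μ(t))·exp(−c·∫_{t₀}^{t} α(μ(τ)) dτ) ≤ α(μ(t₀))·exp(−(c/2)·∫_{t₀}^{t} α(μ(τ)) dτ). -/

import Mathlib

open Set

/-!
Put `f = α ∘ μ`. Since `μ' = μ²` cancels the factor `s⁻²` in the growth condition on `α`, the chain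
rule gives the Riccati inequality `f' ≤ (c/2) f²`. Read as the linear inequality `f' ≤ g f` with
`g = (c/2) f`, it says that `f` times the integrating factor `exp (-∫ g)` decreases; multiplying
by that factor once more gives the claim.
-/

theorem antitoneOn_mul_exp_neg_integral_of_deriv_le_mul {f f' g : ℝ → ℝ} {a b : ℝ}
    (hf : ContinuousOn f (Icc a b)) (hg : ContinuousOn g (Icc a b))
    (hf' : ∀ x ∈ Ioo a b, HasDerivAt f (f' x) x) (hle : ∀ x ∈ Ioo a b, f' x ≤ g x * f x) :
    AntitoneOn (fun t ↦ f t * Real.exp (-∫ x in a..t, g x)) (Icc a b) := by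
  have hprimitive : ContinuousOn (fun t ↦ ∫ x in a..t, g x) (Icc a b) :=
    (intervalIntegral.continuousOn_primitive hg.integrableOn_Icc).congr fun t ht ↦
      intervalIntegral.integral_of_le ht.1
  have hintegral : ∀ x ∈ Ioo a b, HasDerivAt (fun t ↦ ∫ y in a..t, g y) (g x) x := fun x hx ↦
    intervalIntegral.integral_hasDerivAt_right
      ((hg.mono (Icc_subset_Icc_right hx.2.le)).intervalIntegrable_of_Icc hx.1.le)
      ((hg.mono Ioo_subset_Icc_self).stronglyMeasurableAtFilter isOpen_Ioo x hx)
      (hg.continuousAt (Icc_mem_nhds hx.1 hx.2))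
  refine antitoneOn_of_hasDerivWithinAt_nonpos (convex_Icc a b)
    (f' := fun x ↦ (f' x - g x * f x) * Real.exp (-∫ y in a..x, g y))
    (hf.mul hprimitive.neg.rexp) (fun x hx ↦ ?_) (fun x hx ↦ ?_) <;> rw [interior_Icc] at hx
  · exact ((hf' x hx).fun_mul (hintegral x hx).fun_neg.exp).hasDerivWithinAt.congr_deriv (by ring)
  · exact mul_nonpos_of_nonpos_of_nonneg (sub_nonpos.2 (hle x hx)) (Real.exp_nonneg _)

theorem mul_exp_neg_two_mul_integral_le_of_deriv_le_sq {f f' : ℝ → ℝ} {a b k : ℝ} (hab : a ≤ b)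
    (hf : ContinuousOn f (Icc a b)) (hf' : ∀ x ∈ Ioo a b, HasDerivAt f (f' x) x)
    (hriccati : ∀ x ∈ Ioo a b, f' x ≤ k * f x ^ 2) :
    f b * Real.exp (-(2 * k) * ∫ x in a..b, f x) ≤ f a * Real.exp (-k * ∫ x in a..b, f x) := by
  have hanti : AntitoneOn (fun t ↦ f t * Real.exp (-∫ x in a..t, k * f x)) (Icc a b) :=
    antitoneOn_mul_exp_neg_integral_of_deriv_le_mul hf (hf.const_mul k) hf' fun x hx ↦
      (hriccati x hx).trans_eq (by ring)
  have hdecay : f b * Real.exp (-k * ∫ x in a..b, f x) ≤ f a := by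
    simpa using hanti (left_mem_Icc.2 hab) (right_mem_Icc.2 hab) hab
  calc f b * Real.exp (-(2 * k) * ∫ x in a..b, f x)
      = f b * Real.exp (-k * ∫ x in a..b, f x) * Real.exp (-k * ∫ x in a..b, f x) := by
        rw [mul_assoc, ← Real.exp_add]; ring_nf
    _ ≤ f a * Real.exp (-k * ∫ x in a..b, f x) := by gcongr

theorem hasDerivAt_one_div_const_sub {𝕜 : Type*} [NontriviallyNormedField 𝕜] {C x : 𝕜}
    (hx : C - x ≠ 0) : HasDerivAt (fun t ↦ 1 / (C - t)) ((1 / (C - x)) ^ 2) x := by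
  simpa using ((hasDerivAt_id x).const_sub C).fun_inv hx

theorem gain_absorption_inequality_general (T t₀ c : ℝ)
    (μ : ℝ → ℝ) (hμ : ∀ t, μ t = 1 / (T + t₀ - t)) (α α' : ℝ → ℝ)
    (hαderiv : ∀ s, 0 < s → HasDerivAt α (α' s) s)
    (hα' : ∀ s, 0 < s → α' s ≤ c / 2 * s⁻¹ ^ 2 * α s ^ 2) :
    ∀ t ∈ Ico t₀ (t₀ + T),
      α (μ t) * Real.exp (-c * ∫ τ in t₀..t, α (μ τ)) ≤
        α (μ t₀) * Real.exp (-(c / 2) * ∫ τ in t₀..t, α (μ τ)) := by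
  intro t ht
  have hgap : ∀ x ∈ Icc t₀ t, 0 < T + t₀ - x := fun x hx ↦ by linarith [hx.2, ht.2]
  have hμpos : ∀ x ∈ Icc t₀ t, 0 < μ x := fun x hx ↦ hμ x ▸ one_div_pos.2 (hgap x hx)
  have hμderiv : ∀ x ∈ Icc t₀ t, HasDerivAt μ (μ x ^ 2) x := fun x hx ↦ by
    simpa only [← hμ] using hasDerivAt_one_div_const_sub (hgap x hx).ne'
  have hαμ : ∀ x ∈ Icc t₀ t, HasDerivAt (fun τ ↦ α (μ τ)) (α' (μ x) * μ x ^ 2) x :=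
    fun x hx ↦ (hαderiv _ (hμpos x hx)).comp x (hμderiv x hx)
  have hriccati : ∀ x ∈ Icc t₀ t, α' (μ x) * μ x ^ 2 ≤ c / 2 * α (μ x) ^ 2 := fun x hx ↦ by
    have hμne := (hμpos x hx).ne'
    calc α' (μ x) * μ x ^ 2 ≤ c / 2 * (μ x)⁻¹ ^ 2 * α (μ x) ^ 2 * μ x ^ 2 := by
          gcongr; exact hα' _ (hμpos x hx)
      _ = c / 2 * α (μ x) ^ 2 := by field_simp
  have hmain := mul_exp_neg_two_mul_integral_le_of_deriv_le_sq ht.1 (HasDerivAt.continuousOn hαμ)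
    (fun x hx ↦ hαμ x (Ioo_subset_Icc_self hx)) fun x hx ↦ hriccati x (Ioo_subset_Icc_self hx)
  rwa [mul_div_cancel₀ c two_ne_zero] at hmain

/-- **Inequality (41)** in the proof of Theorem 3: if `α'(s) ≤ (c/2)·s⁻²·α(s)²`, then
the factor `α(μ(t))` can be absorbed at the cost of halving the exponential decay rate:
`α(μ(t))·exp(-c·∫_{t₀}^t α(μ(τ)) dτ) ≤ α(μ(t₀))·exp(-(c/2)·∫_{t₀}^t α(μ(τ)) dτ)`. -/
theorem gain_absorption_inequality
    (T t₀ c : ℝ) (hT : 0 < T) (hc : 0 < c)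
    (μ : ℝ → ℝ) (hμ : ∀ t, μ t = 1 / (T + t₀ - t))
    (α α' : ℝ → ℝ)
    (hαpos : ∀ s, 0 < s → 0 < α s)
    (hαderiv : ∀ s, 0 < s → HasDerivAt α (α' s) s)
    (hα' : ∀ s, 0 < s → α' s ≤ c / 2 * s⁻¹ ^ 2 * α s ^ 2) :
    ∀ t ∈ Ico t₀ (t₀ + T),
      α (μ t) * Real.exp (-c * ∫ τ in t₀..t, α (μ τ)) ≤
        α (μ t₀) * Real.exp (-(c / 2) * ∫ τ in t₀..t, α (μ τ)) :=
  gain_absorption_inequality_general T t₀ c μ hμ α α' hαderiv hα'
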